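/- arXiv:math/0702664 — 2 statements merged into one kernel-verified Lean document; each statement's English description precedes it below -/
import Mathlib

section
/- For every λ ∈ ℝ define Ω_{λ,λ+4}(X,Y)(f) = −λX′Y^(5)f + X′Y^(4)f′ − 6X′Y‴f″ − 4X′Y″f‴ − (the same expression with X and Y exchanged). Then Ω_{λ,λ+4} = [[C_{λ+4,λ+4}, C_{λ,λ+4}]] (with C_{λ+4,λ+4} valued in D_{λ+4,λ+4} and C_{λ,λ+4} valued in D_{λ,λ+4}), and Ω_{λ,λ+4} is a 2-cocycle on Vect(1) with values in D_{λ,λ+4}. -/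
noncomputable section

/-- Polynomials over ℝ, identified with polynomial vector fields / densities on the line. -/
abbrev P : Type := Polynomial ℝ

/-- Derivative d/dx. -/
def D : P → P := fun f => Polynomial.derivative f

/-- Iterated derivative: `Dk k f = f^(k)`. -/
def Dk (k : ℕ) : P → P := D^[k]

/-- Lie bracket on Vect(1): [X,Y] = XY' - X'Y. -/
def br (X Y : P) : P := X * D Y - D X * Y

/-- Action of the vector field X on λ-densities: `L_X^λ f = X f' + λ X' f`. -/
def Lw (l : ℝ) (X f : P) : P := X * D f + Polynomial.C l * D X * f

/-- Action on operators from F_ν to F_μ: `L_X^{ν,μ}(A) = L_X^μ ∘ A - A ∘ L_X^ν`. -/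
def LD (nu mu : ℝ) (X : P) (A : P → P) (f : P) : P := Lw mu X (A f) - A (Lw nu X f)

/-- 1-cocycle condition with values in D_{ν,μ}. -/
def IsCocycle1 (nu mu : ℝ) (c : P → P → P) : Prop :=
  ∀ X Y f, c (br X Y) f = LD nu mu X (c Y) f - LD nu mu Y (c X) f

/-- 2-cocycle condition with values in D_{ν,μ}. -/
def IsCocycle2 (nu mu : ℝ) (o : P → P → P → P) : Prop :=
  ∀ X Y Z f,
    LD nu mu X (o Y Z) f - LD nu mu Y (o X Z) f + LD nu mu Z (o X Y) f
      - o (br X Y) Z f + o (br X Z) Y f - o (br Y Z) X f = 0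

/-- Cup product of 1-cochains: `[[C₁,C₂]](X,Y) = C₁(X)∘C₂(Y) - C₁(Y)∘C₂(X)`. -/
def cup (c₁ c₂ : P → P → P) (X Y f : P) : P := c₁ X (c₂ Y f) - c₁ Y (c₂ X f)

/-- Coboundary of a 1-cochain b with values in D_{ν,μ}. -/
def cob (nu mu : ℝ) (b : P → P → P) (X Y f : P) : P :=
  LD nu mu X (b Y) f - LD nu mu Y (b X) f - b (br X Y) f


/-- Half of the 2-cocycle `Ω_{λ,λ+4}`. -/
def term10 (l : ℝ) (X Y f : P) : P :=
  -(Polynomial.C l) * D X * Dk 5 Y * f + D X * Dk 4 Y * D f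
    - 6 * D X * Dk 3 Y * Dk 2 f - 4 * D X * Dk 2 Y * Dk 3 f

/-!
Since `L_X` acts as a derivation on compositions of operators, the cup product of two 1-cocycles is
a 2-cocycle, so it suffices that `C_{λ+4,λ+4}` and `C_{λ,λ+4}` are 1-cocycles. For the latter, up
to derivatives of `X` of order at least two, `Y^(i)` transforms under `X` like a density of weight
`i - 1`, and `∂^j` maps `λ`-densities to `(λ+j)`-densities. The terms `Y^(i) f^(j)` of `C_{λ,λ+4}`
all have `i + j = 5`, so the weights match, and the cocycle identity only compares the equivariance
defects of the `∂^j` on `F_λ` with those of the `∂^i` on `F_{-1}`, which enter because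
`[X,Y] = L_X^{-1} Y`.
-/

theorem Lw_sub (nu : ℝ) (X f g : P) : Lw nu X (f - g) = Lw nu X f - Lw nu X g := by
  simp only [Lw, D, map_sub]
  ring

theorem Lw_add (nu : ℝ) (X f g : P) : Lw nu X (f + g) = Lw nu X f + Lw nu X g := by
  simp only [Lw, D, map_add]
  ring

theorem Lw_mul (a b : ℝ) (X f g : P) : Lw (a + b) X (f * g) = Lw a X f * g + f * Lw b X g := by
  simp only [Lw, D, Polynomial.derivative_mul, map_add]
  ring

theorem Lw_C_mul (nu a : ℝ) (X f : P) :
    Lw nu X (Polynomial.C a * f) = Polynomial.C a * Lw nu X f := by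
  simp only [Lw, D, Polynomial.derivative_C_mul]
  ring

theorem br_eq_Lw (X Y : P) : br X Y = Lw (-1) X Y := by
  simp only [br, Lw, map_neg, map_one]
  ring

theorem D_br (X Y : P) : D (br X Y) = X * D (D Y) - D (D X) * Y := by
  simp only [br, D, Polynomial.derivative_sub, Polynomial.derivative_mul]
  ring

theorem LD_add (nu mu : ℝ) (X : P) (A B : P → P) (f : P) :
    LD nu mu X (fun g => A g + B g) f = LD nu mu X A f + LD nu mu X B f := by
  simp only [LD, Lw_add]
  ring

theorem LD_sub (nu mu : ℝ) (X : P) (A B : P → P) (f : P) :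
    LD nu mu X (fun g => A g - B g) f = LD nu mu X A f - LD nu mu X B f := by
  simp only [LD, Lw_sub]
  ring

theorem LD_C_mul (nu mu a : ℝ) (X : P) (A : P → P) (f : P) :
    LD nu mu X (fun g => Polynomial.C a * A g) f = Polynomial.C a * LD nu mu X A f := by
  simp only [LD, Lw_C_mul]
  ring

theorem LD_comp (nu mu xi : ℝ) (X : P) {A : P → P} (hA : ∀ f g, A (f - g) = A f - A g)
    (B : P → P) (f : P) :
    LD nu xi X (fun g => A (B g)) f = LD mu xi X A (B f) + A (LD nu mu X B f) := by
  simp only [LD, hA]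
  ring

theorem LD_cup (nu mu xi : ℝ) {c₁ : P → P → P} (hc₁ : ∀ X f g, c₁ X (f - g) = c₁ X f - c₁ X g)
    (c₂ : P → P → P) (X Y Z f : P) :
    LD nu xi X (cup c₁ c₂ Y Z) f =
      LD mu xi X (c₁ Y) (c₂ Z f) + c₁ Y (LD nu mu X (c₂ Z) f)
        - (LD mu xi X (c₁ Z) (c₂ Y f) + c₁ Z (LD nu mu X (c₂ Y) f)) := by
  rw [← LD_comp nu mu xi X (hc₁ Y), ← LD_comp nu mu xi X (hc₁ Z), ← LD_sub]
  rfl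

theorem IsCocycle1.isCocycle2_cup {nu mu xi : ℝ} {c₁ c₂ : P → P → P} (h₁ : IsCocycle1 mu xi c₁)
    (hc₁ : ∀ X f g, c₁ X (f - g) = c₁ X f - c₁ X g) (h₂ : IsCocycle1 nu mu c₂) :
    IsCocycle2 nu xi (cup c₁ c₂) := by
  intro X Y Z f
  simp only [LD_cup nu mu xi hc₁, cup, h₁ _ _ _, h₂ _ _ _, hc₁]
  ring

theorem isCocycle1_divergence (mu : ℝ) : IsCocycle1 mu mu fun X f => D X * f := by
  intro X Y f
  have LD_divergence (X Y : P) : LD mu mu X (fun g => D Y * g) f = X * D (D Y) * f := by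
    simp only [LD, Lw, D, Polynomial.derivative_mul]
    ring
  simp only [LD_divergence, D_br]
  ring

theorem Dk_zero (f : P) : Dk 0 f = f := rfl

theorem Dk_one (f : P) : Dk 1 f = D f := rfl

theorem D_Dk (k : ℕ) (f : P) : D (Dk k f) = Dk (k + 1) f :=
  (Function.iterate_succ_apply' D k f).symm

theorem Dk_mul (k : ℕ) (f g : P) :
    Dk k (f * g) = ∑ i ∈ Finset.range (k + 1), (k.choose i : P) * Dk i f * Dk (k - i) g := by
  rw [mul_comm]
  refine (Polynomial.iterate_derivative_mul g f).trans (Finset.sum_congr rfl fun i _ => ?_)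
  rw [nsmul_eq_mul, mul_assoc, mul_comm (Polynomial.derivative^[k - i] g)]
  rfl

theorem Dk_mul_D (k : ℕ) (X f : P) :
    Dk k (X * D f) = X * Dk (k + 1) f + k * D X * Dk k f
      + ∑ i ∈ Finset.range k, (k.choose (i + 2) : P) * Dk (i + 2) X * Dk (k - (i + 1)) f := by
  have leibniz_succ : Dk k (X * D f) =
      ∑ i ∈ Finset.range (k + 2), (k.choose i : P) * Dk i X * Dk (k + 1 - i) f := by
    rw [Dk_mul, Finset.sum_range_succ _ (k + 1), Nat.choose_succ_self, Nat.cast_zero, zero_mul,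
      zero_mul, add_zero]
    refine Finset.sum_congr rfl fun i hi => ?_
    rw [Nat.succ_sub (Finset.mem_range_succ_iff.mp hi)]
    rfl
  rw [leibniz_succ, Finset.sum_range_succ', Finset.sum_range_succ', add_assoc, add_comm]
  simp only [Nat.add_sub_add_right, zero_add, Nat.choose_one_right, Nat.choose_zero_right,
    Nat.cast_one, one_mul, Nat.sub_zero]
  rw [add_comm (_ * _ * _)]
  rfl

theorem Dk_D_mul (k : ℕ) (X f : P) :
    Dk k (D X * f) = D X * Dk k f
      + ∑ i ∈ Finset.range k, (k.choose (i + 1) : P) * Dk (i + 2) X * Dk (k - (i + 1)) f := by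
  rw [Dk_mul, Finset.sum_range_succ', Nat.choose_zero_right, Nat.cast_one, one_mul, Nat.sub_zero,
    add_comm]
  rfl

/-- The defect `∂^k L_X^ν f - L_X^{ν+k} ∂^k f` of equivariance of `∂^k : F_ν → F_{ν+k}`, as an
explicit bilinear differential operator. -/
def lwDefect (nu : ℝ) (k : ℕ) (X f : P) : P :=
  ∑ i ∈ Finset.range k,
    ((k.choose (i + 2) : P) + Polynomial.C nu * k.choose (i + 1)) * Dk (i + 2) X
      * Dk (k - (i + 1)) f

theorem Dk_Lw (nu : ℝ) (k : ℕ) (X f : P) :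
    Dk k (Lw nu X f) = Lw (nu + k) X (Dk k f) + lwDefect nu k X f := by
  have Dk_split : Dk k (Lw nu X f) = Dk k (X * D f) + Polynomial.C nu * Dk k (D X * f) := by
    rw [Lw, mul_assoc]
    exact (iterate_map_add Polynomial.derivative k _ _).trans
      (congrArg _ (Polynomial.iterate_derivative_C_mul _ _ _))
  rw [Dk_split, Dk_mul_D, Dk_D_mul]
  simp only [Lw, lwDefect, D_Dk, map_add, map_natCast, add_mul, mul_add, Finset.mul_sum,
    Finset.sum_add_distrib, mul_assoc]
  ring

theorem LD_mul_Dk {nu mu w : ℝ} {k : ℕ} (hw : w + (nu + k) = mu) (X a f : P) :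
    LD nu mu X (fun g => a * Dk k g) f = Lw w X a * Dk k f - a * lwDefect nu k X f := by
  rw [LD, ← hw, Lw_mul, Dk_Lw]
  ring

theorem lwDefect_one (nu : ℝ) (X f : P) : lwDefect nu 1 X f = Polynomial.C nu * Dk 2 X * f := by
  simp [lwDefect, Dk_zero]

theorem lwDefect_two (nu : ℝ) (X f : P) :
    lwDefect nu 2 X f =
      (1 + 2 * Polynomial.C nu) * Dk 2 X * D f + Polynomial.C nu * Dk 3 X * f := by
  simp only [lwDefect, Finset.sum_range_succ, Finset.sum_range_zero, Nat.choose, Nat.reduceAdd,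
    Nat.reduceSub, Dk_zero, Dk_one]
  push_cast
  ring

theorem lwDefect_three (nu : ℝ) (X f : P) :
    lwDefect nu 3 X f = (3 + 3 * Polynomial.C nu) * Dk 2 X * Dk 2 f
      + (1 + 3 * Polynomial.C nu) * Dk 3 X * D f + Polynomial.C nu * Dk 4 X * f := by
  simp only [lwDefect, Finset.sum_range_succ, Finset.sum_range_zero, Nat.choose, Nat.reduceAdd,
    Nat.reduceSub, Dk_zero, Dk_one]
  push_cast
  ring

theorem lwDefect_four (nu : ℝ) (X f : P) :
    lwDefect nu 4 X f = (6 + 4 * Polynomial.C nu) * Dk 2 X * Dk 3 f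
      + (4 + 6 * Polynomial.C nu) * Dk 3 X * Dk 2 f
      + (1 + 4 * Polynomial.C nu) * Dk 4 X * D f + Polynomial.C nu * Dk 5 X * f := by
  simp only [lwDefect, Finset.sum_range_succ, Finset.sum_range_zero, Nat.choose, Nat.reduceAdd,
    Nat.reduceSub, Dk_zero, Dk_one]
  push_cast
  ring

theorem lwDefect_five (nu : ℝ) (X f : P) :
    lwDefect nu 5 X f = (10 + 5 * Polynomial.C nu) * Dk 2 X * Dk 4 f
      + (10 + 10 * Polynomial.C nu) * Dk 3 X * Dk 3 f
      + (5 + 10 * Polynomial.C nu) * Dk 4 X * Dk 2 f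
      + (1 + 5 * Polynomial.C nu) * Dk 5 X * D f + Polynomial.C nu * Dk 6 X * f := by
  simp only [lwDefect, Finset.sum_range_succ, Finset.sum_range_zero, Nat.choose, Nat.reduceAdd,
    Nat.reduceSub, Dk_zero, Dk_one]
  push_cast
  ring

theorem Dk_br (k : ℕ) (X Y : P) :
    Dk k (br X Y) = Lw (k - 1) X (Dk k Y) + lwDefect (-1) k X Y := by
  rw [br_eq_Lw, Dk_Lw, neg_add_eq_sub]

theorem Dk_two_br (X Y : P) :
    Dk 2 (br X Y) = X * Dk 3 Y + D X * Dk 2 Y - Dk 2 X * D Y - Dk 3 X * Y := by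
  simp only [Dk_br, Lw, D_Dk, lwDefect_two, map_neg, map_one, map_sub, map_ofNat, Nat.cast_ofNat]
  ring

theorem Dk_three_br (X Y : P) :
    Dk 3 (br X Y) = X * Dk 4 Y + 2 * D X * Dk 3 Y - 2 * Dk 3 X * D Y - Dk 4 X * Y := by
  simp only [Dk_br, Lw, D_Dk, lwDefect_three, map_neg, map_one, map_sub, map_ofNat, Nat.cast_ofNat]
  ring

theorem Dk_four_br (X Y : P) :
    Dk 4 (br X Y) = X * Dk 5 Y + 3 * D X * Dk 4 Y + 2 * Dk 2 X * Dk 3 Y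
      - 2 * Dk 3 X * Dk 2 Y - 3 * Dk 4 X * D Y - Dk 5 X * Y := by
  simp only [Dk_br, Lw, D_Dk, lwDefect_four, map_neg, map_one, map_sub, map_ofNat, Nat.cast_ofNat]
  ring

theorem Dk_five_br (X Y : P) :
    Dk 5 (br X Y) = X * Dk 6 Y + 4 * D X * Dk 5 Y + 5 * Dk 2 X * Dk 4 Y
      - 5 * Dk 4 X * Dk 2 Y - 4 * Dk 5 X * D Y - Dk 6 X * Y := by
  simp only [Dk_br, Lw, D_Dk, lwDefect_five, map_neg, map_one, map_sub, map_ofNat, Nat.cast_ofNat]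
  ring

/-- The 1-cochain `C_{λ,λ+4}`, the right factor of the cup product `Ω_{λ,λ+4}`. -/
def cochainFour (l : ℝ) (X f : P) : P :=
  -(Polynomial.C l) * Dk 5 X * f + Dk 4 X * D f - 6 * Dk 3 X * Dk 2 f - 4 * Dk 2 X * Dk 3 f

theorem LD_cochainFour (l : ℝ) (X Y f : P) :
    LD l (l + 4) X (cochainFour l Y) f =
      -(Polynomial.C l) * Lw 4 X (Dk 5 Y) * f + Lw 3 X (Dk 4 Y) * D f
        - 6 * Lw 2 X (Dk 3 Y) * Dk 2 f - 4 * Lw 1 X (Dk 2 Y) * Dk 3 f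
        - Dk 4 Y * lwDefect l 1 X f + 6 * Dk 3 Y * lwDefect l 2 X f
        + 4 * Dk 2 Y * lwDefect l 3 X f := by
  have expand : cochainFour l Y = fun f =>
      Polynomial.C (-l) * (Dk 5 Y * Dk 0 f) + Dk 4 Y * Dk 1 f
        - Polynomial.C 6 * (Dk 3 Y * Dk 2 f) - Polynomial.C 4 * (Dk 2 Y * Dk 3 f) := by
    funext f
    simp only [cochainFour, map_neg, Polynomial.C_ofNat, mul_assoc, Dk_zero, Dk_one]
  have defect_zero : lwDefect l 0 X f = 0 := Finset.sum_range_zero _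
  rw [expand, LD_sub, LD_sub, LD_add, LD_C_mul, LD_C_mul, LD_C_mul,
    LD_mul_Dk (w := 4) (by push_cast; ring), LD_mul_Dk (w := 3) (by push_cast; ring),
    LD_mul_Dk (w := 2) (by push_cast; ring), LD_mul_Dk (w := 1) (by push_cast; ring), defect_zero,
    Dk_zero, Dk_one]
  simp only [map_neg, Polynomial.C_ofNat]
  ring

-- The nontrivial cancellations: `-5λ = -λ - 4λ` in `X^(2) Y^(4) f` and
-- `2 = 6(1 + 2λ) - 4(1 + 3λ)` in `X^(2) Y^(3) f^(1)`.
theorem isCocycle1_cochainFour (l : ℝ) : IsCocycle1 l (l + 4) (cochainFour l) := by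
  intro X Y f
  rw [LD_cochainFour, LD_cochainFour, cochainFour, Dk_two_br, Dk_three_br, Dk_four_br, Dk_five_br]
  simp only [Lw, D_Dk, lwDefect_one, lwDefect_two, lwDefect_three, map_ofNat, map_one]
  ring

/-- `Ω_{λ,λ+4} = [[C_{λ+4,λ+4},C_{λ,λ+4}]]` is a 2-cocycle with values
in `D_{λ,λ+4}`. -/
theorem Om4_two_cocycle (l : ℝ) :
    (∀ X Y f : P, term10 l X Y f - term10 l Y X f =
      cup (fun X f => D X * f)
        (fun X f => -(Polynomial.C l) * Dk 5 X * f + Dk 4 X * D f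
          - 6 * Dk 3 X * Dk 2 f - 4 * Dk 2 X * Dk 3 f) X Y f) ∧
    IsCocycle2 l (l + 4) (fun X Y f => term10 l X Y f - term10 l Y X f) := by
  have cup_eq (X Y f : P) : term10 l X Y f - term10 l Y X f =
      cup (fun X f => D X * f) (cochainFour l) X Y f := by
    simp only [term10, cup, cochainFour]
    ring
  refine ⟨cup_eq, ?_⟩
  simp only [cup_eq]
  exact (isCocycle1_divergence (l + 4)).isCocycle2_cup (fun X => mul_sub (D X))
    (isCocycle1_cochainFour l)
end
end

section
/- (Deformations of the space of symbols S²₃ = F₁ ⊕ F₂ ⊕ F₃.) On triples (f₁,f₂,f₃) of polynomials, let L_X(f₁,f₂,f₃) = (L_X¹f₁, L_X²f₂, L_X³f₃), and define the operators C_{1,1}(X)(f₁,f₂,f₃) = (X′f₁,0,0), C_{2,2}(X)(f₁,f₂,f₃) = (0,X′f₂,0), C_{3,3}(X)(f₁,f₂,f₃) = (0,0,X′f₃), and C_{1,3}(X)(f₁,f₂,f₃) = (0,0,X‴f₁ + 2X″f₁′). Then for all real parameters t₁, t₂, t₃, each of the two maps ℒ_X = L_X + t₁(C_{1,1}(X)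 + C_{3,3}(X)) + t₂C_{2,2}(X) + t₃C_{1,3}(X) and ℒ_X = L_X + t₁C_{1,1}(X) + t₂C_{2,2}(X) + t₃C_{3,3}(X) defines a Vect(1)-action: ℒ_{[X,Y]} = ℒ_X ∘ ℒ_Y − ℒ_Y ∘ ℒ_X for all X, Y ∈ ℝ[x]. -/
/-!
Since `X′` acts on densities by a shift of weight, `L_X^λ + t X′ = L_X^{λ+t}`, the second map is the
direct sum `F_{1+t₁} ⊕ F_{2+t₂} ⊕ F_{3+t₃}`. The first one is an extension of `F_{1+t₁}` by
`F_{2+t₂} ⊕ F_{3+t₁}`; as the two outer weights still differ by `2`, it suffices that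
`X‴ f + 2 X″ f′` is a 1-cocycle from `F_λ` to `F_{λ+2}` for every `λ`. Its two terms are separately
cocycles. `X ↦ X″` and `X ↦ X‴` are 1-cocycles with values in `F₁` and `F₂`, so by the Leibniz rule
`X‴ f` is one. For `X″ f′`, the failure of `d/dx : F_λ → F_{λ+1}` to be equivariant contributes
`-λ X″ Y″ f`, which is symmetric in `X` and `Y` and hence cancels.
-/

noncomputable section

/-- The space of symbols `S²₃ = F₁ ⊕ F₂ ⊕ F₃`, as triples of polynomials. -/
abbrev V3 : Type := P × P × P

/-- The Lie derivative on `S²₃`. -/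
def L3 (X : P) (v : V3) : V3 := (Lw 1 X v.1, Lw 2 X v.2.1, Lw 3 X v.2.2)

def C11' (X : P) (v : V3) : V3 := (D X * v.1, 0, 0)
def C22' (X : P) (v : V3) : V3 := (0, D X * v.2.1, 0)
def C33' (X : P) (v : V3) : V3 := (0, 0, D X * v.2.2)
def C13' (X : P) (v : V3) : V3 := (0, 0, Dk 3 X * v.1 + 2 * Dk 2 X * D v.1)

/-- First deformation of the action on `S²₃`. -/
def LLa (t1 t2 t3 : ℝ) (X : P) (v : V3) : V3 :=
  L3 X v + t1 • (C11' X v + C33' X v) + t2 • C22' X v + t3 • C13' X v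

/-- Second deformation of the action on `S²₃`. -/
def LLb (t1 t2 t3 : ℝ) (X : P) (v : V3) : V3 :=
  L3 X v + t1 • C11' X v + t2 • C22' X v + t3 • C33' X v

section HomCocycles

variable {M N K : Type*} [AddCommGroup N] [AddCommGroup K]

/-- `c` is a 1-cocycle of Vect(1) with values in the maps from the module `(M, A)` to the module
`(N, B)`, on which `X` acts by `T ↦ B X ∘ T - T ∘ A X`. This is `IsCocycle1` for arbitrary modules
in place of densities; such cocycles are the data of extensions of `M` by `N`. -/
def IsHomCocycle (A : P → M → M) (B : P → N → N) (c : P → M → N) : Prop :=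
  ∀ X Y m, c (br X Y) m = B X (c Y m) - c Y (A X m) - (B Y (c X m) - c X (A Y m))

theorem IsHomCocycle.linear_combination {R : Type*} [Ring R] [Module R N] {A : P → M → M}
    {B : P → N → N} {c c' : P → M → N} (hlin : ∀ X, IsLinearMap R (B X))
    (hc : IsHomCocycle A B c) (hc' : IsHomCocycle A B c') (a b : R) :
    IsHomCocycle A B fun X m => a • c X m + b • c' X m := by
  intro X Y m
  simp only [(hlin _).map_add, (hlin _).map_smul, hc X Y m, hc' X Y m, smul_sub]
  abel

theorem IsHomCocycle.inr {A : P → M → M} {B : P → N → N} {B' : P → K → K} {c : P → M → N}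
    (hzero : ∀ X, B' X 0 = 0) (hc : IsHomCocycle A B c) :
    IsHomCocycle A (fun X (v : K × N) => (B' X v.1, B X v.2)) fun X m => (0, c X m) := by
  intro X Y m
  refine Prod.ext ?_ (hc X Y m)
  simp only [Prod.fst_sub, hzero, sub_self]

end HomCocycles

section Actions

variable {M N : Type*} [AddCommGroup M] [AddCommGroup N]

/-- `A` is an action of Vect(1) on `M`. Only compatibility with the bracket is required; linearity
of the operators `A X` is a separate hypothesis where it matters. -/
def IsVectAction (A : P → M → M) : Prop :=
  ∀ X Y v, A (br X Y) v = A X (A Y v) - A Y (A X v)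

theorem IsVectAction.prod {A : P → M → M} {B : P → N → N}
    (hA : IsVectAction A) (hB : IsVectAction B) :
    IsVectAction fun X (v : M × N) => (A X v.1, B X v.2) :=
  fun X Y v => Prod.ext (hA X Y v.1) (hB X Y v.2)

theorem IsVectAction.extension {A : P → M → M} {B : P → N → N} {c : P → M → N}
    (hA : IsVectAction A) (hB : IsVectAction B) (hadd : ∀ X n n', B X (n + n') = B X n + B X n')
    (hc : IsHomCocycle A B c) :
    IsVectAction fun X (v : M × N) => (A X v.1, B X v.2 + c X v.1) := by
  rintro X Y ⟨m, n⟩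
  refine Prod.ext (hA X Y m) ?_
  simp only [Prod.snd_sub, hadd, hB X Y n, hc X Y m]
  abel

end Actions

section Densities

theorem isLinearMap_Lw (l : ℝ) (X : P) : IsLinearMap ℝ (Lw l X) where
  map_add f g := by
    simp only [Lw, D, Polynomial.derivative_add]
    ring
  map_smul a f := by
    simp only [Lw, D, Polynomial.derivative_smul, smul_add, mul_smul_comm]

theorem isVectAction_Lw (l : ℝ) : IsVectAction (Lw l) := by
  intro X Y f
  simp only [Lw, br, D, Polynomial.derivative_add, Polynomial.derivative_sub,
    Polynomial.derivative_mul, Polynomial.derivative_C]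
  ring

theorem Lw_add_weight (l t : ℝ) (X f : P) : Lw (l + t) X f = Lw l X f + t • (D X * f) := by
  simp only [Lw, Polynomial.C_add, Polynomial.smul_eq_C_mul]
  ring

theorem Lw_add_mul (k l : ℝ) (X f g : P) :
    Lw (k + l) X (f * g) = Lw k X f * g + f * Lw l X g := by
  simp only [Lw, D, Polynomial.derivative_mul, Polynomial.C_add]
  ring

theorem D_sub (f g : P) : D (f - g) = D f - D g :=
  Polynomial.derivative_sub

theorem D_Lw (l : ℝ) (X f : P) :
    D (Lw l X f) = Lw (l + 1) X (D f) + Polynomial.C l * Dk 2 X * f := by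
  change D (Lw l X f) = Lw (l + 1) X (D f) + Polynomial.C l * D (D X) * f
  simp only [Lw, D, Polynomial.derivative_add, Polynomial.derivative_mul,
    Polynomial.derivative_C, Polynomial.C_add, Polynomial.C_1]
  ring

end Densities

section Cocycles

/-- `a` is a 1-cocycle of Vect(1) with values in the module of `k`-densities; multiplication by it
then gives cocycles between density modules whose weights differ by `k`. -/
def IsDensityCocycle (k : ℝ) (a : P → P) : Prop :=
  ∀ X Y, a (br X Y) = Lw k X (a Y) - Lw k Y (a X)

theorem isDensityCocycle_D : IsDensityCocycle 0 D := by
  intro X Y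
  simp only [Lw, br, D, Polynomial.derivative_sub, Polynomial.derivative_mul, Polynomial.C_0]
  ring

theorem isDensityCocycle_Dk_two : IsDensityCocycle 1 (Dk 2) := by
  intro X Y
  calc D (D (br X Y)) = D (Lw 0 X (D Y)) - D (Lw 0 Y (D X)) := by
        rw [isDensityCocycle_D X Y, D_sub]
    _ = Lw 1 X (D (D Y)) - Lw 1 Y (D (D X)) := by
        simp only [D_Lw, zero_add, Polynomial.C_0, zero_mul, add_zero]

theorem isDensityCocycle_Dk_three : IsDensityCocycle 2 (Dk 3) := by
  intro X Y
  calc D (Dk 2 (br X Y)) = D (Lw 1 X (Dk 2 Y)) - D (Lw 1 Y (Dk 2 X)) := by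
        rw [isDensityCocycle_Dk_two X Y, D_sub]
    _ = Lw 2 X (D (Dk 2 Y)) - Lw 2 Y (D (Dk 2 X)) := by
        rw [D_Lw, D_Lw, mul_right_comm _ (Dk 2 X), add_sub_add_right_eq_sub, one_add_one_eq_two]

theorem IsDensityCocycle.isCocycle1_mul {k : ℝ} {a : P → P} (ha : IsDensityCocycle k a) (l : ℝ) :
    IsCocycle1 l (k + l) fun X f => a X * f := by
  intro X Y f
  simp only [LD, Lw_add_mul, ha X Y]
  ring

theorem LD_Dk_two_mul_D (l : ℝ) (X Y f : P) :
    LD l (1 + (l + 1)) X (fun g => Dk 2 Y * D g) f =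
      Lw 1 X (Dk 2 Y) * D f - Polynomial.C l * (Dk 2 X * Dk 2 Y) * f := by
  simp only [LD, Lw_add_mul, D_Lw]
  ring

theorem isCocycle1_Dk_two_mul_D (l : ℝ) :
    IsCocycle1 l (1 + (l + 1)) fun X f => Dk 2 X * D f := by
  intro X Y f
  simp only [LD_Dk_two_mul_D, isDensityCocycle_Dk_two X Y]
  ring

theorem isHomCocycle_smul_Dk_three_add_smul_Dk_two (l a b : ℝ) :
    IsHomCocycle (Lw l) (Lw (2 + l)) fun X f => a • (Dk 3 X * f) + b • (Dk 2 X * D f) := by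
  have h_three : IsHomCocycle (Lw l) (Lw (2 + l)) fun X f => Dk 3 X * f :=
    isDensityCocycle_Dk_three.isCocycle1_mul l
  have weight_eq : 1 + (l + 1) = 2 + l := by ring
  have h_two : IsHomCocycle (Lw l) (Lw (2 + l)) fun X f => Dk 2 X * D f :=
    weight_eq ▸ isCocycle1_Dk_two_mul_D l
  exact h_three.linear_combination (isLinearMap_Lw _) h_two a b

end Cocycles

section Symbols

theorem isVectAction_densities_extension {l n : ℝ} {c : P → P → P} (m : ℝ)
    (hc : IsHomCocycle (Lw l) (Lw n) c) :
    IsVectAction fun X (v : V3) => (Lw l X v.1, Lw m X v.2.1, Lw n X v.2.2 + c X v.1) := by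
  have hadd (X : P) (w w' : P × P) :
      (Lw m X (w + w').1, Lw n X (w + w').2) =
        (Lw m X w.1, Lw n X w.2) + (Lw m X w'.1, Lw n X w'.2) :=
    Prod.ext ((isLinearMap_Lw m X).map_add _ _) ((isLinearMap_Lw n X).map_add _ _)
  simpa only [Prod.mk_add_mk, add_zero] using
    (isVectAction_Lw l).extension ((isVectAction_Lw m).prod (isVectAction_Lw n)) hadd
      (hc.inr fun X => (isLinearMap_Lw m X).map_zero)

theorem LLa_apply (t1 t2 t3 : ℝ) (X : P) (v : V3) :
    LLa t1 t2 t3 X v = (Lw (1 + t1) X v.1, Lw (2 + t2) X v.2.1,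
      Lw (2 + (1 + t1)) X v.2.2 + (t3 • (Dk 3 X * v.1) + (t3 * 2) • (Dk 2 X * D v.1))) := by
  have weight_eq : 2 + (1 + t1) = 3 + t1 := by ring
  simp only [weight_eq, LLa, L3, C11', C22', C33', C13', Lw_add_weight, Prod.smul_mk,
    Prod.mk_add_mk, smul_zero, add_zero, zero_add, smul_add, add_assoc, mul_smul, two_smul, two_mul,
    add_mul]

theorem LLb_apply (t1 t2 t3 : ℝ) (X : P) (v : V3) :
    LLb t1 t2 t3 X v = (Lw (1 + t1) X v.1, Lw (2 + t2) X v.2.1, Lw (3 + t3) X v.2.2) := by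
  simp only [LLb, L3, C11', C22', C33', Lw_add_weight, Prod.smul_mk, Prod.mk_add_mk, smul_zero,
    add_zero]

theorem isVectAction_LLa (t1 t2 t3 : ℝ) : IsVectAction (LLa t1 t2 t3) := by
  simpa only [IsVectAction, LLa_apply] using isVectAction_densities_extension (2 + t2)
    (isHomCocycle_smul_Dk_three_add_smul_Dk_two (1 + t1) t3 (t3 * 2))

theorem isVectAction_LLb (t1 t2 t3 : ℝ) : IsVectAction (LLb t1 t2 t3) := by
  simpa only [IsVectAction, LLb_apply] using
    (isVectAction_Lw (1 + t1)).prod ((isVectAction_Lw (2 + t2)).prod (isVectAction_Lw (3 + t3)))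

end Symbols

/-- both deformations define Vect(1)-actions on `S²₃` for all parameters. -/
theorem deformations_of_S23 (t1 t2 t3 : ℝ) :
    (∀ X Y : P, ∀ v : V3,
      LLa t1 t2 t3 (br X Y) v
        = LLa t1 t2 t3 X (LLa t1 t2 t3 Y v) - LLa t1 t2 t3 Y (LLa t1 t2 t3 X v)) ∧
    (∀ X Y : P, ∀ v : V3,
      LLb t1 t2 t3 (br X Y) v
        = LLb t1 t2 t3 X (LLb t1 t2 t3 Y v) - LLb t1 t2 t3 Y (LLb t1 t2 t3 X v)) :=
  ⟨isVectAction_LLa t1 t2 t3, isVectAction_LLb t1 t2 t3⟩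
end
end
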